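/- The sequence of real numbers M(n)/p(n) tends to 0 as n tends to infinity; that is, M(n) = o(p(n)). -/

import Mathlib

/-- The product, with multiplicity, of the factorials of the elements of a multiset. -/
def factorialProd (A : Multiset ℕ) : ℕ := (A.map Nat.factorial).prod

/-- `M n`: the number of distinct multinomial coefficients with upper entry `n`, i.e. the
number of distinct values of `∏_{j ∈ λ} j!` as `λ` ranges over the partitions of `n`. -/
noncomputable def M (n : ℕ) : ℕ :=
  Set.ncard {v : ℕ | ∃ P : Nat.Partition n, factorialProd P.parts = v}

/-- `numPartitions n`: the number of partitions of `n`. -/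
noncomputable def numPartitions (n : ℕ) : ℕ := Fintype.card (Nat.Partition n)

/-!
Since `4! * 1! * 1! * 1! = 3! * 2! * 2!` and `4 + 1 + 1 + 1 = 3 + 2 + 2`, exchanging `{4, 1, 1, 1}`
for `{3, 2, 2}`, which has fewer parts, as long as possible shows that every value of the factorial
product is attained at a partition not containing `{4, 1, 1, 1}`. It remains to see that almost all
partitions contain a given multiset `s` of positive parts. Exactly `p (n - s.sum)` partitions of `n`
do, so this amounts to `p (n - 1) / p n → 1`, i.e. to the partitions of `n` without ones being
negligible.

For that we follow Bateman and Erdős. Deleting one part from a partition of `n` without ones leaves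
a multiset of integers `≥ 2` with sum at most `n`, from which the deleted part can be recovered, and
padding with ones injects such multisets into the partitions of `n`. So the number of distinct part
sizes, summed over the partitions without ones, is at most `p n`: at most `p n / (d + 1)` of them
have more than `d` distinct part sizes. The others are polynomially many in `n`, whereas `p n` grows
faster than any polynomial.
-/

open Filter Asymptotics Finset

lemma factorialProd_add (s t : Multiset ℕ) :
    factorialProd (s + t) = factorialProd s * factorialProd t := by
  simp only [factorialProd, Multiset.map_add, Multiset.prod_add]

/-- The partitions of `n` that do not contain `s` as a sub-multiset of their parts. -/
def partitionsAvoiding (n : ℕ) (s : Multiset ℕ) : Finset n.Partition := {P | ¬ s ≤ P.parts}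

lemma mem_partitionsAvoiding {n : ℕ} {s : Multiset ℕ} {P : n.Partition} :
    P ∈ partitionsAvoiding n s ↔ ¬ s ≤ P.parts := by
  simp only [partitionsAvoiding, mem_filter_univ]

lemma mem_partitionsAvoiding_singleton {n a : ℕ} {P : n.Partition} :
    P ∈ partitionsAvoiding n {a} ↔ a ∉ P.parts := by
  rw [mem_partitionsAvoiding, Multiset.singleton_le]

section Exchange

variable {s t : Multiset ℕ}

lemma exists_mem_partitionsAvoiding_factorialProd_eq (ht : 0 ∉ t) (hsum : t.sum = s.sum)
    (hcard : t.card < s.card) (hprod : factorialProd t = factorialProd s) {n : ℕ}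
    (P : n.Partition) :
    ∃ Q ∈ partitionsAvoiding n s, factorialProd Q.parts = factorialProd P.parts := by
  induction hk : P.parts.card using Nat.strong_induction_on generalizing P with
  | _ k ih =>
    by_cases hP : s ≤ P.parts
    · obtain ⟨u, hu⟩ := Multiset.le_iff_exists_add.mp hP
      let exchanged : n.Partition :=
        { parts := t + u
          parts_pos := fun {i} hi ↦ by
            rcases Multiset.mem_add.mp hi with hi | hi
            · exact Nat.pos_of_ne_zero (ne_of_mem_of_not_mem hi ht)
            · exact P.parts_pos (hu ▸ Multiset.mem_add.mpr (.inr hi))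
          parts_sum := by rw [Multiset.sum_add, hsum, ← Multiset.sum_add, ← hu, P.parts_sum] }
      have exchanged_card_lt : exchanged.parts.card < k := by
        rw [← hk, hu, Multiset.card_add, Multiset.card_add]
        gcongr
      obtain ⟨Q, hQ, hQprod⟩ := ih _ exchanged_card_lt exchanged rfl
      refine ⟨Q, hQ, hQprod.trans ?_⟩
      rw [hu, factorialProd_add, factorialProd_add, hprod]
    · exact ⟨P, mem_partitionsAvoiding.mpr hP, rfl⟩

lemma M_le_card_partitionsAvoiding (ht : 0 ∉ t) (hsum : t.sum = s.sum)
    (hcard : t.card < s.card) (hprod : factorialProd t = factorialProd s) (n : ℕ) :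
    M n ≤ #(partitionsAvoiding n s) := by
  have values_subset : {v : ℕ | ∃ P : n.Partition, factorialProd P.parts = v} ⊆
      (fun P : n.Partition ↦ factorialProd P.parts) '' partitionsAvoiding n s := by
    rintro _ ⟨P, rfl⟩
    exact exists_mem_partitionsAvoiding_factorialProd_eq ht hsum hcard hprod P
  calc M n ≤ Set.ncard ((fun P : n.Partition ↦ factorialProd P.parts) '' partitionsAvoiding n s) :=
        Set.ncard_le_ncard values_subset
    _ ≤ Set.ncard (partitionsAvoiding n s : Set n.Partition) := Set.ncard_image_le
    _ = #(partitionsAvoiding n s) := Set.ncard_coe_finset _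

end Exchange

/-- Removing a fixed multiset `s` of positive parts identifies the partitions of `n + s.sum` that
contain `s` with the partitions of `n`. -/
def partitionsContainingEquiv (n : ℕ) {s : Multiset ℕ} (hs : 0 ∉ s) :
    {P : (n + s.sum).Partition // s ≤ P.parts} ≃ n.Partition where
  toFun P :=
    { parts := P.1.parts - s
      parts_pos := fun hi ↦ P.1.parts_pos (Multiset.mem_of_le (Multiset.sub_le_self _ _) hi)
      parts_sum := by
        have hsum := congrArg Multiset.sum (Multiset.sub_add_cancel P.2)
        rw [Multiset.sum_add, P.1.parts_sum] at hsum
        exact Nat.add_right_cancel hsum }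
  invFun P :=
    ⟨{ parts := P.parts + s
       parts_pos := fun {i} hi ↦ by
        rcases Multiset.mem_add.mp hi with hi | hi
        · exact P.parts_pos hi
        · exact Nat.pos_of_ne_zero (ne_of_mem_of_not_mem hi hs)
       parts_sum := by rw [Multiset.sum_add, P.parts_sum] },
      Multiset.le_add_left _ _⟩
  left_inv P := Subtype.ext (Nat.Partition.ext (Multiset.sub_add_cancel P.2))
  right_inv P := Nat.Partition.ext Multiset.add_sub_cancel_right

lemma card_partitionsAvoiding_add_numPartitions (n : ℕ) {s : Multiset ℕ} (hs : 0 ∉ s) :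
    #(partitionsAvoiding (n + s.sum) s) + numPartitions n = numPartitions (n + s.sum) := by
  have card_containing : #{P : (n + s.sum).Partition | s ≤ P.parts} = numPartitions n := by
    rw [← Fintype.card_subtype]
    exact Fintype.card_congr (partitionsContainingEquiv n hs)
  rw [← card_containing, add_comm, partitionsAvoiding, card_filter_add_card_filter_not]
  rfl

lemma card_partitionsAvoiding_one_add_numPartitions (n : ℕ) :
    #(partitionsAvoiding (n + 1) {1}) + numPartitions n = numPartitions (n + 1) :=
  card_partitionsAvoiding_add_numPartitions n (s := {1}) (by decide)

lemma numPartitions_monotone : Monotone numPartitions :=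
  monotone_nat_of_le_succ fun n ↦
    (Nat.le_add_left _ _).trans_eq (card_partitionsAvoiding_one_add_numPartitions n)

-- Padding with ones: a partition is determined by its parts other than `1`.
lemma card_le_numPartitions_of_injOn {ι : Type*} {n : ℕ} {S : Finset ι} {f : ι → Multiset ℕ}
    (hf : Set.InjOn f S) (two_le : ∀ x ∈ S, ∀ i ∈ f x, 2 ≤ i) (sum_le : ∀ x ∈ S, (f x).sum ≤ n) :
    #S ≤ numPartitions n := by
  have image_subset : S.image f ⊆ univ.image fun P : n.Partition ↦ P.parts.filter (2 ≤ ·) := by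
    refine image_subset_iff.mpr fun x hx ↦ mem_image.mpr ?_
    let padded : n.Partition :=
      { parts := f x + Multiset.replicate (n - (f x).sum) 1
        parts_pos := fun {i} hi ↦ by
          rcases Multiset.mem_add.mp hi with hi | hi
          · exact two_pos.trans_le (two_le x hx i hi)
          · exact Multiset.eq_of_mem_replicate hi ▸ one_pos
        parts_sum := by simp [Nat.add_sub_of_le (sum_le x hx)] }
    refine ⟨padded, mem_univ _, ?_⟩
    rw [Multiset.filter_add, Multiset.filter_eq_self.mpr (two_le x hx), Multiset.filter_eq_nil.mpr,
      add_zero]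
    intro i hi
    rw [Multiset.eq_of_mem_replicate hi]
    decide
  calc #S = #(S.image f) := (card_image_of_injOn hf).symm
    _ ≤ #(univ.image fun P : n.Partition ↦ P.parts.filter (2 ≤ ·)) := card_le_card image_subset
    _ ≤ numPartitions n := card_image_le

lemma two_pow_le_numPartitions {k n : ℕ} (hkn : k * (k + 1) ≤ n) : 2 ^ k ≤ numPartitions n := by
  have card_subsets : #(Icc 2 (k + 1)).powerset = 2 ^ k := by simp
  rw [← card_subsets]
  refine card_le_numPartitions_of_injOn (f := Finset.val) val_injective.injOn ?_ ?_
  · exact fun t ht i hi ↦ (mem_Icc.mp (mem_powerset.mp ht hi)).1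
  · intro t ht
    have card_le : #t ≤ k := by simpa using card_le_card (mem_powerset.mp ht)
    calc t.val.sum ≤ #t • (k + 1) :=
          Multiset.sum_le_card_nsmul _ _ fun i hi ↦ (mem_Icc.mp (mem_powerset.mp ht hi)).2
      _ ≤ k * (k + 1) := Nat.mul_le_mul_right _ card_le
      _ ≤ n := hkn

lemma two_pow_sqrt_succ_le_numPartitions (n : ℕ) : 2 ^ (n.sqrt + 1) ≤ 4 * numPartitions n := by
  have pred_bound : (n.sqrt - 1) * (n.sqrt - 1 + 1) ≤ n :=
    calc (n.sqrt - 1) * (n.sqrt - 1 + 1) ≤ n.sqrt * n.sqrt := by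
          rcases n.sqrt with _ | k
          · simp
          · exact Nat.mul_le_mul_right _ k.le_succ
      _ ≤ n := n.sqrt_le
  calc 2 ^ (n.sqrt + 1) ≤ 2 ^ (2 + (n.sqrt - 1)) := Nat.pow_le_pow_right two_pos (by omega)
    _ = 4 * 2 ^ (n.sqrt - 1) := pow_add 2 2 _
    _ ≤ 4 * numPartitions n := Nat.mul_le_mul_left 4 (two_pow_le_numPartitions pred_bound)

lemma tendsto_nat_sqrt_atTop : Tendsto Nat.sqrt atTop atTop :=
  tendsto_atTop_atTop.mpr fun b ↦ ⟨b ^ 2, fun _ hn ↦ Nat.le_sqrt'.mpr hn⟩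

lemma succ_pow_isLittleO_numPartitions (d : ℕ) :
    (fun n : ℕ ↦ ((n : ℝ) + 1) ^ d) =o[atTop] fun n ↦ (numPartitions n : ℝ) := by
  have pow_isBigO : (fun n : ℕ ↦ ((n : ℝ) + 1) ^ d) =O[atTop]
      fun n ↦ ((n.sqrt + 1 : ℕ) : ℝ) ^ (2 * d) := by
    refine .of_norm_le fun n ↦ ?_
    rw [Real.norm_of_nonneg (by positivity), pow_mul]
    gcongr
    exact_mod_cast n.lt_succ_sqrt'
  have pow_isLittleO : (fun n : ℕ ↦ ((n.sqrt + 1 : ℕ) : ℝ) ^ (2 * d)) =o[atTop]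
      fun n ↦ (2 : ℝ) ^ (n.sqrt + 1) :=
    (isLittleO_pow_const_const_pow_of_one_lt (2 * d) one_lt_two).comp_tendsto
      ((tendsto_add_atTop_nat 1).comp tendsto_nat_sqrt_atTop)
  have two_pow_isBigO : (fun n : ℕ ↦ (2 : ℝ) ^ (n.sqrt + 1)) =O[atTop]
      fun n ↦ (numPartitions n : ℝ) := by
    refine .of_bound 4 (.of_forall fun n ↦ ?_)
    rw [Real.norm_of_nonneg (by positivity), Real.norm_natCast]
    exact_mod_cast two_pow_sqrt_succ_le_numPartitions n
  exact (pow_isBigO.trans_isLittleO pow_isLittleO).trans_isBigO two_pow_isBigO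

lemma card_filter_powerset_card_le {α : Type*} {s : Finset α} (hs : s.Nonempty) (d : ℕ) :
    #{t ∈ s.powerset | #t ≤ d} ≤ (d + 1) * #s ^ d := by
  classical
  have subset_biUnion : {t ∈ s.powerset | #t ≤ d} ⊆
      (range (d + 1)).biUnion fun k ↦ s.powersetCard k := by
    intro t ht
    rw [mem_filter, mem_powerset] at ht
    exact mem_biUnion.mpr
      ⟨#t, mem_range_succ_iff.mpr ht.2, mem_powersetCard.mpr ⟨ht.1, rfl⟩⟩
  have card_le (k : ℕ) (hk : k ∈ range (d + 1)) : #(s.powersetCard k) ≤ #s ^ d := by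
    rw [card_powersetCard]
    exact (Nat.choose_le_pow _ _).trans
      (Nat.pow_le_pow_right hs.card_pos (mem_range_succ_iff.mp hk))
  calc #{t ∈ s.powerset | #t ≤ d} ≤ #(range (d + 1)) * #s ^ d :=
        (card_le_card subset_biUnion).trans (card_biUnion_le_card_mul _ _ _ card_le)
    _ = (d + 1) * #s ^ d := by rw [card_range]

lemma count_parts_le {n : ℕ} (P : n.Partition) (i : ℕ) : P.parts.count i ≤ n := by
  calc P.parts.count i ≤ P.parts.card • 1 := by simpa using Multiset.count_le_card i P.parts
    _ ≤ P.parts.sum := Multiset.card_nsmul_le_sum fun _ hi ↦ P.parts_pos hi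
    _ = n := P.parts_sum

/-- The partitions of `n` with at most `d` distinct part sizes. -/
def partitionsFewSizes (n d : ℕ) : Finset n.Partition := {P | #P.parts.toFinset ≤ d}

-- Such a partition is encoded by its set of at most `d` pairs `(part, multiplicity)`.
lemma card_partitionsFewSizes_le (n d : ℕ) :
    #(partitionsFewSizes n d) ≤ (d + 1) * ((n + 1) ^ 2) ^ d := by
  let pairs : Finset (ℕ × ℕ) := range (n + 1) ×ˢ range (n + 1)
  have card_pairs : #pairs = (n + 1) ^ 2 := by
    rw [card_product, card_range, sq]
  rw [← card_pairs]
  refine (card_le_card_of_injOn (fun P ↦ P.parts.toFinsupp.graph) (fun P hP ↦ ?_) ?_).trans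
    (card_filter_powerset_card_le (s := pairs) (by simp [pairs]) d)
  · rw [mem_coe, mem_filter, mem_powerset]
    constructor
    · rintro ⟨i, m⟩ him
      obtain ⟨hcount, hm⟩ := Finsupp.mk_mem_graph_iff.mp him
      rw [Multiset.toFinsupp_apply] at hcount
      subst hcount
      exact mk_mem_product
        (mem_range_succ_iff.mpr (Nat.Partition.le_of_mem_parts (Multiset.count_ne_zero.mp hm)))
        (mem_range_succ_iff.mpr (count_parts_le P i))
    · calc #P.parts.toFinsupp.graph = #P.parts.toFinset := card_map _
        _ ≤ d := (mem_filter.mp hP).2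
  · intro P _ Q _ hPQ
    exact Nat.Partition.ext (Multiset.toFinsupp.injective (Finsupp.graph_injective _ _ hPQ))

lemma card_partitionsFewSizes_isLittleO (d : ℕ) :
    (fun n ↦ (#(partitionsFewSizes n d) : ℝ)) =o[atTop] fun n ↦ (numPartitions n : ℝ) := by
  refine IsBigO.trans_isLittleO (.of_bound (d + 1) (.of_forall fun n ↦ ?_))
    (succ_pow_isLittleO_numPartitions (2 * d))
  rw [Real.norm_natCast, Real.norm_of_nonneg (by positivity), pow_mul]
  exact_mod_cast card_partitionsFewSizes_le n d

-- Deleting a part `j` from a partition of `n` without ones loses nothing: `j` is recovered as the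
-- deficit of the remaining sum from `n`.
lemma sum_card_toFinset_partitionsAvoiding_one_le (n : ℕ) :
    ∑ P ∈ partitionsAvoiding n {1}, #P.parts.toFinset ≤ numPartitions n := by
  rw [← card_sigma]
  have mem_iff (x : Σ _ : n.Partition, ℕ) :
      x ∈ (partitionsAvoiding n {1}).sigma (fun P ↦ P.parts.toFinset) ↔
        1 ∉ x.1.parts ∧ x.2 ∈ x.1.parts := by
    rw [mem_sigma, mem_partitionsAvoiding_singleton, Multiset.mem_toFinset]
  have add_sum_erase (P : n.Partition) {j : ℕ} (hj : j ∈ P.parts) :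
      j + (P.parts.erase j).sum = n := by
    rw [Multiset.sum_erase hj, P.parts_sum]
  refine card_le_numPartitions_of_injOn (f := fun x ↦ x.1.parts.erase x.2) ?_ ?_ ?_
  · rintro ⟨P, j⟩ hPj ⟨Q, k⟩ hQk (herase : P.parts.erase j = Q.parts.erase k)
    have hj : j ∈ P.parts := ((mem_iff _).mp hPj).2
    have hk : k ∈ Q.parts := ((mem_iff _).mp hQk).2
    obtain rfl : j = k := by
      have hsum := (add_sum_erase P hj).trans (add_sum_erase Q hk).symm
      rw [herase] at hsum
      exact Nat.add_right_cancel hsum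
    obtain rfl : P = Q := Nat.Partition.ext <| by
      rw [← Multiset.cons_erase hj, herase, Multiset.cons_erase hk]
    rfl
  · rintro ⟨P, j⟩ hPj i hi
    have hiP : i ∈ P.parts := Multiset.mem_of_mem_erase hi
    have i_ne_one : i ≠ 1 := ne_of_mem_of_not_mem hiP ((mem_iff _).mp hPj).1
    have i_pos : 0 < i := P.parts_pos hiP
    omega
  · rintro ⟨P, j⟩ hPj
    exact (Nat.le_add_left _ _).trans_eq (add_sum_erase P ((mem_iff _).mp hPj).2)

lemma succ_mul_card_partitionsAvoiding_one_le (n d : ℕ) :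
    (d + 1) * #(partitionsAvoiding n {1}) ≤
      numPartitions n + (d + 1) * #(partitionsFewSizes n d) := by
  have card_le : #(partitionsAvoiding n {1}) ≤
      #(partitionsAvoiding n {1} \ partitionsFewSizes n d) + #(partitionsFewSizes n d) := by
    rw [← Nat.sub_le_iff_le_add]
    exact le_card_sdiff _ _
  have markov : (d + 1) * #(partitionsAvoiding n {1} \ partitionsFewSizes n d) ≤
      numPartitions n :=
    calc (d + 1) * #(partitionsAvoiding n {1} \ partitionsFewSizes n d)
        = #(partitionsAvoiding n {1} \ partitionsFewSizes n d) • (d + 1) := mul_comm _ _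
      _ ≤ ∑ P ∈ partitionsAvoiding n {1} \ partitionsFewSizes n d, #P.parts.toFinset := by
          refine card_nsmul_le_sum _ _ _ fun P hP ↦ ?_
          simpa [partitionsFewSizes] using (mem_sdiff.mp hP).2
      _ ≤ ∑ P ∈ partitionsAvoiding n {1}, #P.parts.toFinset :=
          sum_le_sum_of_subset sdiff_subset
      _ ≤ numPartitions n := sum_card_toFinset_partitionsAvoiding_one_le n
  calc (d + 1) * #(partitionsAvoiding n {1})
      ≤ (d + 1) * (#(partitionsAvoiding n {1} \ partitionsFewSizes n d) +
          #(partitionsFewSizes n d)) := Nat.mul_le_mul_left _ card_le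
    _ ≤ numPartitions n + (d + 1) * #(partitionsFewSizes n d) := by
        rw [mul_add]
        gcongr

lemma card_partitionsAvoiding_one_isLittleO :
    (fun n ↦ (#(partitionsAvoiding n {1}) : ℝ)) =o[atTop] fun n ↦ (numPartitions n : ℝ) := by
  refine isLittleO_iff.mpr fun c hc ↦ ?_
  obtain ⟨d, hd⟩ := exists_nat_one_div_lt (half_pos hc)
  filter_upwards [(card_partitionsFewSizes_isLittleO d).bound (half_pos hc)] with n hfew
  rw [Real.norm_natCast, Real.norm_natCast] at hfew ⊢
  have hmul : ((d : ℝ) + 1) * #(partitionsAvoiding n {1}) ≤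
      numPartitions n + (d + 1) * #(partitionsFewSizes n d) := by
    exact_mod_cast succ_mul_card_partitionsAvoiding_one_le n d
  calc (#(partitionsAvoiding n {1}) : ℝ)
      ≤ 1 / (d + 1) * numPartitions n + #(partitionsFewSizes n d) := by
        rw [← mul_le_mul_iff_right₀ (Nat.cast_add_one_pos (α := ℝ) d)]
        refine hmul.trans_eq ?_
        field_simp
    _ ≤ c / 2 * numPartitions n + c / 2 * numPartitions n := by gcongr
    _ = c * numPartitions n := by ring

lemma numPartitions_add_sub_isLittleO (k : ℕ) :
    (fun n ↦ (numPartitions (n + k) : ℝ) - numPartitions n) =o[atTop]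
      fun n ↦ (numPartitions (n + k) : ℝ) := by
  induction k with
  | zero => simp
  | succ k ih =>
    have last_step : (fun n ↦ (#(partitionsAvoiding (n + (k + 1)) {1}) : ℝ)) =o[atTop]
        fun n ↦ (numPartitions (n + (k + 1)) : ℝ) :=
      card_partitionsAvoiding_one_isLittleO.comp_tendsto (tendsto_add_atTop_nat (k + 1))
    have mono : (fun n ↦ (numPartitions (n + k) : ℝ)) =O[atTop]
        fun n ↦ (numPartitions (n + (k + 1)) : ℝ) := by
      refine .of_norm_le fun n ↦ ?_
      rw [Real.norm_natCast]
      exact_mod_cast numPartitions_monotone (Nat.le_succ (n + k))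
    refine (last_step.add (ih.trans_isBigO mono)).congr_left fun n ↦ ?_
    rw [← add_assoc n k 1, ← card_partitionsAvoiding_one_add_numPartitions (n + k)]
    push_cast
    ring

theorem card_partitionsAvoiding_isLittleO {s : Multiset ℕ} (hs : 0 ∉ s) :
    (fun n ↦ (#(partitionsAvoiding n s) : ℝ)) =o[atTop] fun n ↦ (numPartitions n : ℝ) := by
  have shifted : (fun n ↦ (#(partitionsAvoiding (n + s.sum) s) : ℝ)) =o[atTop]
      fun n ↦ (numPartitions (n + s.sum) : ℝ) := by
    refine (numPartitions_add_sub_isLittleO s.sum).congr_left fun n ↦ ?_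
    rw [← card_partitionsAvoiding_add_numPartitions n hs]
    push_cast
    ring
  rw [← map_add_atTop_eq_nat s.sum, isLittleO_map]
  exact shifted

/-- `M(n)/p(n) → 0` as `n → ∞`, i.e. `M(n) = o(p(n))`. -/
theorem M_div_p_tendsto_zero :
    Filter.Tendsto (fun n : ℕ => (M n : ℝ) / (numPartitions n : ℝ))
      Filter.atTop (nhds 0) := by
  have M_le (n : ℕ) : M n ≤ #(partitionsAvoiding n {4, 1, 1, 1}) :=
    M_le_card_partitionsAvoiding (t := {3, 2, 2}) (by decide) (by decide) (by decide) (by decide) n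
  have M_isBigO : (fun n ↦ (M n : ℝ)) =O[atTop]
      fun n ↦ (#(partitionsAvoiding n {4, 1, 1, 1}) : ℝ) := by
    refine .of_norm_le fun n ↦ ?_
    rw [Real.norm_natCast]
    exact_mod_cast M_le n
  exact (M_isBigO.trans_isLittleO
    (card_partitionsAvoiding_isLittleO (by decide))).tendsto_div_nhds_zero
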